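/- The double integral over the unit square of the function f_2(x,y) = (1/2 − xy)^6 · 1_{xy ≤ 1/2} equals (1/896)·(363/140 + log 2); that is, ∫_0^1 ∫_0^1 (1/2 − xy)^6 · 1_{xy ≤ 1/2} dx dy = (1/896)·(363/140 + log 2). -/

import Mathlib

/-!
For `x > 0` the inner integral of the truncated power `(c - x y)₊ⁿ` over `0 ≤ y ≤ b` is
`(cⁿ⁺¹ - (c - x b)₊ⁿ⁺¹) / ((n + 1) x)`. For `x ≤ c / b` the geometric sum cancels the denominator
`x`, and the resulting polynomial integrates to a harmonic number. For `x ≥ c / b` only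
`cⁿ⁺¹ / ((n + 1) x)` remains, which integrates to a logarithm. The constants `1 / 896` and
`363 / 140` are `(1 / 2)⁷ / 7` and the seventh harmonic number.
-/

open Finset MeasureTheory Set

theorem pow_succ_sub_sub_mul_pow_succ_div {K : Type*} [Field K] {x : K} (hx : x ≠ 0) (b c : K)
    (n : ℕ) :
    (c ^ (n + 1) - (c - x * b) ^ (n + 1)) / x =
      b * ∑ i ∈ range (n + 1), (c - x * b) ^ i * c ^ (n - i) := by
  have geom_sum := geom_sum₂_mul (c - x * b) c (n + 1)
  rw [add_tsub_cancel_right] at geom_sum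
  rw [div_eq_iff hx]
  linear_combination geom_sum

theorem sub_mul_min_div {K : Type*} [Field K] [LinearOrder K] [IsStrictOrderedRing K] {x : K}
    (hx : 0 < x) (b c : K) : c - x * min b (c / x) = max (c - x * b) 0 := by
  rw [mul_min_of_nonneg _ _ hx.le, mul_div_cancel₀ _ hx.ne', ← max_sub_sub_left, sub_self]

theorem integral_eq_add_of_eqOn_uIoc {E : Type*} [NormedAddCommGroup E] [NormedSpace ℝ E]
    {μ : Measure ℝ} {f g h : ℝ → E} {a b c : ℝ} (hg : IntervalIntegrable g μ a b)
    (hh : IntervalIntegrable h μ b c) (hgf : EqOn g f (uIoc a b)) (hhf : EqOn h f (uIoc b c)) :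
    ∫ x in a..c, f x ∂μ = (∫ x in a..b, g x ∂μ) + ∫ x in b..c, h x ∂μ := by
  rw [← intervalIntegral.integral_add_adjacent_intervals (hg.congr hgf) (hh.congr hhf),
    intervalIntegral.integral_congr_ae (ae_of_all μ hgf),
    intervalIntegral.integral_congr_ae (ae_of_all μ hhf)]

theorem integral_ite_mul_le {E : Type*} [NormedAddCommGroup E] [NormedSpace ℝ E]
    {μ : Measure ℝ} {a b c x : ℝ} (hx : 0 < x) (hab : a ≤ b) (hac : x * a ≤ c) (f : ℝ → E) :
    ∫ y in a..b, (if x * y ≤ c then f y else 0) ∂μ = ∫ y in a..min b (c / x), f y ∂μ := by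
  have hmin : min b (c / x) ∈ Icc a b :=
    ⟨le_min hab ((le_div_iff₀' hx).mpr hac), min_le_left _ _⟩
  rw [← intervalIntegral.integral_indicator hmin]
  refine intervalIntegral.integral_congr fun y hy ↦ ?_
  rw [uIcc_of_le hab] at hy
  simp only [indicator_apply, mem_ofPred_eq, le_min_iff, hy.2, true_and, le_div_iff₀' hx]

theorem integral_sub_mul_pow {x : ℝ} (hx : x ≠ 0) (a b c : ℝ) (n : ℕ) :
    ∫ y in a..b, (c - x * y) ^ n =
      ((c - x * a) ^ (n + 1) - (c - x * b) ^ (n + 1)) / ((n + 1) * x) := by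
  rw [intervalIntegral.integral_comp_sub_mul (fun u ↦ u ^ n) hx, integral_pow, smul_eq_mul,
    inv_mul_eq_div, div_div]

theorem integral_ite_sub_mul_pow {b c x : ℝ} (hx : 0 < x) (hb : 0 ≤ b) (hc : 0 ≤ c) (n : ℕ) :
    ∫ y in (0 : ℝ)..b, (if x * y ≤ c then (c - x * y) ^ n else 0) =
      (c ^ (n + 1) - max (c - x * b) 0 ^ (n + 1)) / ((n + 1) * x) := by
  rw [integral_ite_mul_le hx hb (by simpa only [mul_zero] using hc), integral_sub_mul_pow hx.ne',
    sub_mul_min_div hx, mul_zero, sub_zero]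

theorem integral_ite_sub_mul_pow_of_mul_le {b c x : ℝ} (hx : 0 < x) (hb : 0 ≤ b)
    (hxb : x * b ≤ c) (n : ℕ) :
    ∫ y in (0 : ℝ)..b, (if x * y ≤ c then (c - x * y) ^ n else 0) =
      (n + 1 : ℝ)⁻¹ * (b * ∑ i ∈ range (n + 1), (c - x * b) ^ i * c ^ (n - i)) := by
  have hc : 0 ≤ c := (mul_nonneg hx.le hb).trans hxb
  rw [integral_ite_sub_mul_pow hx hb hc, max_eq_left (sub_nonneg.mpr hxb), mul_comm (n + 1 : ℝ),
    ← div_div, pow_succ_sub_sub_mul_pow_succ_div hx.ne', div_eq_inv_mul]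

theorem integral_ite_sub_mul_pow_of_le_mul {b c x : ℝ} (hx : 0 < x) (hb : 0 ≤ b) (hc : 0 ≤ c)
    (hxb : c ≤ x * b) (n : ℕ) :
    ∫ y in (0 : ℝ)..b, (if x * y ≤ c then (c - x * y) ^ n else 0) =
      c ^ (n + 1) / (n + 1) * x⁻¹ := by
  rw [integral_ite_sub_mul_pow hx hb hc, max_eq_right (sub_nonpos.mpr hxb),
    zero_pow n.succ_ne_zero, sub_zero, ← div_div, ← div_eq_mul_inv]

theorem integral_mul_sum_sub_mul_pow {b : ℝ} (hb : b ≠ 0) (c : ℝ) (n : ℕ) :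
    ∫ x in (0 : ℝ)..c / b, b * ∑ i ∈ range (n + 1), (c - x * b) ^ i * c ^ (n - i) =
      c ^ (n + 1) * harmonic (n + 1) := by
  have integral_term (i : ℕ) (hi : i ∈ range (n + 1)) :
      ∫ x in (0 : ℝ)..c / b, (c - x * b) ^ i * c ^ (n - i) =
        c ^ (n + 1) / b * ((i + 1 : ℕ) : ℝ)⁻¹ := by
    have pow_split : c ^ (n + 1) = c ^ (i + 1) * c ^ (n - i) := by
      rw [← pow_add]
      congr 1
      grind
    simp only [mul_comm _ b]
    rw [intervalIntegral.integral_mul_const, integral_sub_mul_pow hb, mul_div_cancel₀ _ hb,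
      mul_zero, sub_zero, sub_self, zero_pow i.succ_ne_zero, sub_zero, pow_split]
    push_cast
    field_simp
  rw [intervalIntegral.integral_const_mul, intervalIntegral.integral_finsetSum
    fun i _ ↦ Continuous.intervalIntegrable (by fun_prop) _ _, sum_congr rfl integral_term,
    ← mul_sum, ← mul_assoc, mul_div_cancel₀ _ hb, harmonic]
  push_cast
  rfl

theorem stmt16_general (n : ℕ) {a b c : ℝ} (hb : 0 < b) (hc : 0 < c) (hcab : c ≤ a * b) :
    ∫ x in (0 : ℝ)..a, ∫ y in (0 : ℝ)..b, (if x * y ≤ c then (c - x * y) ^ n else 0) =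
      c ^ (n + 1) / (n + 1) * (harmonic (n + 1) + Real.log (a * b / c)) := by
  have hcb : 0 < c / b := div_pos hc hb
  have hcba : c / b ≤ a := (div_le_iff₀ hb).mpr hcab
  let inner (x : ℝ) : ℝ := ∫ y in (0 : ℝ)..b, if x * y ≤ c then (c - x * y) ^ n else 0
  let left (x : ℝ) : ℝ :=
    (n + 1 : ℝ)⁻¹ * (b * ∑ i ∈ range (n + 1), (c - x * b) ^ i * c ^ (n - i))
  let right (x : ℝ) : ℝ := c ^ (n + 1) / (n + 1) * x⁻¹
  have left_eq : EqOn left inner (uIoc 0 (c / b)) := fun x hx ↦ by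
    rw [uIoc_of_le hcb.le] at hx
    exact (integral_ite_sub_mul_pow_of_mul_le hx.1 hb.le ((le_div_iff₀ hb).mp hx.2) n).symm
  have right_eq : EqOn right inner (uIoc (c / b) a) := fun x hx ↦ by
    rw [uIoc_of_le hcba] at hx
    exact (integral_ite_sub_mul_pow_of_le_mul (hcb.trans hx.1) hb.le hc.le
      ((div_le_iff₀ hb).mp hx.1.le) n).symm
  have left_integrable : IntervalIntegrable left volume 0 (c / b) :=
    Continuous.intervalIntegrable (by fun_prop) _ _
  have right_integrable : IntervalIntegrable right volume (c / b) a :=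
    (intervalIntegrable_inv_iff.mpr
      (.inr (notMem_uIcc_of_lt hcb (hcb.trans_le hcba)))).const_mul _
  calc ∫ x in (0 : ℝ)..a, inner x
      = (∫ x in (0 : ℝ)..c / b, left x) + ∫ x in c / b..a, right x :=
        integral_eq_add_of_eqOn_uIoc left_integrable right_integrable left_eq right_eq
    _ = (n + 1 : ℝ)⁻¹ * (c ^ (n + 1) * harmonic (n + 1)) +
          c ^ (n + 1) / (n + 1) * Real.log (a / (c / b)) := by
        simp only [left, right, intervalIntegral.integral_const_mul,
          ← integral_mul_sum_sub_mul_pow hb.ne', integral_inv_of_pos hcb (hcb.trans_le hcba)]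
    _ = c ^ (n + 1) / (n + 1) * (harmonic (n + 1) + Real.log (a * b / c)) := by
        rw [div_div_eq_mul_div]
        ring

theorem stmt16 :
    (∫ x in (0:ℝ)..1, ∫ y in (0:ℝ)..1,
        (if x * y ≤ 1 / 2 then (1 / 2 - x * y) ^ 6 else (0 : ℝ))) =
      (1 / 896) * (363 / 140 + Real.log 2) := by
  rw [stmt16_general 6 one_pos one_half_pos (by norm_num)]
  norm_num [harmonic, sum_range_succ]
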